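/- Let C be a category with an initial object and colimits of chains, and let F : C → C be an ω-cocontinuous endofunctor. Then the category of F-algebras has an initial object, i.e., F has an initial algebra (whose structure morphism is moreover an isomorphism). -/

import Mathlib

/-!
Iterating `F` on a coalgebra `x : X ⟶ F X` gives a chain `X ⟶ F X ⟶ F² X ⟶ ⋯`. If `F` preserves its
colimit `L`, with coprojections `ιₙ`, then `F L` is the colimit of the shifted chain, so `L` has a
unique algebra structure with `F ιₙ ≫ str = ιₙ₊₁`. For an algebra `b : F B ⟶ B`, the equation
`F g ≫ b = str ≫ g` for a map `g : L ⟶ B` becomes the recursion `ιₙ₊₁ ≫ g = F (ιₙ ≫ g) ≫ b` on its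
components. Thus `g` is determined by `h = ι₀ ≫ g`, and the only constraint on `h` is compatibility
with the first step of the chain, `x ≫ F h ≫ b = h`. When `X` is initial there is exactly one such
`h`, hence exactly one algebra morphism `L ⟶ B`.
-/

open CategoryTheory CategoryTheory.Limits

universe v u

namespace Adamek

open Endofunctor

variable {C : Type u} [Category.{v} C]

/-- The cocone over a chain given by legs compatible with the maps from each object to the next. -/
abbrev coconeOfSucc {G : ℕ ⥤ C} {T : C} (leg : ∀ n, G.obj n ⟶ T)
    (w : ∀ n, G.map (homOfLE (Nat.le_add_right n 1)) ≫ leg (n + 1) = leg n) : Cocone G where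
  pt := T
  ι := NatTrans.ofSequence leg fun n => by simp [w]

variable {F : C ⥤ C}

/-- The coalgebra `F x : F X ⟶ F (F X)` obtained by applying `F` to a coalgebra `x : X ⟶ F X`. -/
abbrev mapCoalgebra (X : Coalgebra F) : Coalgebra F where
  V := F.obj X.V
  str := F.map X.str

/-- The iterated coalgebra `Fⁿ x : Fⁿ X ⟶ Fⁿ⁺¹ X`. Its structure map is also the `n`-th connecting
map of the chain of iterates, since its target is the carrier of the next iterate. -/
abbrev iterCoalgebra (X : Coalgebra F) : ℕ → Coalgebra F
  | 0 => X
  | n + 1 => mapCoalgebra (iterCoalgebra X n)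

/-- The chain `X ⟶ F X ⟶ F² X ⟶ ⋯` of iterates of `F` on a coalgebra. -/
def iterChain (X : Coalgebra F) : ℕ ⥤ C :=
  Functor.ofSequence (X := fun n => (iterCoalgebra X n).V) fun n => (iterCoalgebra X n).str

lemma iterChain_map_succ (X : Coalgebra F) (n : ℕ) :
    (iterChain X).map (homOfLE (Nat.le_add_right n 1)) = (iterCoalgebra X n).str :=
  Functor.ofSequence_map_homOfLE_succ _ n

/-- A coalgebra-to-algebra morphism (hylomorphism) from `x : X ⟶ F X` to `b : F B ⟶ B`: a map
`h : X ⟶ B` with `x ≫ F h ≫ b = h`. -/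
@[ext]
structure CoalgAlgHom (X : Coalgebra F) (B : Algebra F) where
  /-- the underlying morphism between the carriers -/
  hom : X.V ⟶ B.a
  str_map_str : X.str ≫ F.map hom ≫ B.str = hom

namespace CoalgAlgHom

variable {X : Coalgebra F} {B : Algebra F}

/-- The coalgebra-to-algebra morphism `F h ≫ b : F X ⟶ B` induced by `h : X ⟶ B`. -/
def map (h : CoalgAlgHom X B) : CoalgAlgHom (mapCoalgebra X) B where
  hom := F.map h.hom ≫ B.str
  str_map_str := by rw [← F.map_comp_assoc, h.str_map_str]

/-- The coalgebra-to-algebra morphisms `Fⁿ X ⟶ B` induced by `h : X ⟶ B`. -/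
def iter (h : CoalgAlgHom X B) : ∀ n, CoalgAlgHom (iterCoalgebra X n) B
  | 0 => h
  | n + 1 => (h.iter n).map

/-- The cocone `Fⁿ X ⟶ B` over the chain of iterates induced by `h : X ⟶ B`. -/
abbrev cocone (h : CoalgAlgHom X B) : Cocone (iterChain X) :=
  coconeOfSucc (fun n => (h.iter n).hom) fun n => by
    rw [iterChain_map_succ]
    exact (h.iter n).str_map_str

/-- The unique coalgebra-to-algebra morphism out of a coalgebra with initial carrier. -/
abbrev uniqueOfIsInitial (hX : IsInitial X.V) : Unique (CoalgAlgHom X B) where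
  default := ⟨hX.to B.a, hX.hom_ext _ _⟩
  uniq _ := CoalgAlgHom.ext (hX.hom_ext _ _)

end CoalgAlgHom

variable {X : Coalgebra F} (c : Cocone (iterChain X))

/-- The `n`-th leg of a cocone over the chain of iterates, with source displayed as the carrier of
the `n`-th iterated coalgebra. -/
def leg (n : ℕ) : (iterCoalgebra X n).V ⟶ c.pt := c.ι.app n

lemma str_leg_succ (n : ℕ) : (iterCoalgebra X n).str ≫ leg c (n + 1) = leg c n := by
  rw [← iterChain_map_succ]
  exact c.w _

/-- The cocone `F (Fⁿ X) = Fⁿ⁺¹ X ⟶ L` obtained from a cocone `Fⁿ X ⟶ L` by dropping the leg at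
`0`. -/
def shiftCocone : Cocone (iterChain X ⋙ F) :=
  coconeOfSucc (fun n => leg c (n + 1)) fun n => by
    rw [Functor.comp_map, iterChain_map_succ]
    exact str_leg_succ c (n + 1)

variable {c} (hFc : IsColimit (F.mapCocone c))

/-- The map `F L ⟶ L` induced by the shift of the chain, where `L` is the point of a cocone over the
chain of iterates whose image under `F` is a colimit cocone. -/
def colimitStr : F.obj c.pt ⟶ c.pt := hFc.desc (shiftCocone c)

lemma map_leg_colimitStr (n : ℕ) : F.map (leg c n) ≫ colimitStr hFc = leg c (n + 1) :=
  hFc.fac (shiftCocone c) n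

/-- The algebra `F L ⟶ L` on the colimit `L` of the chain of iterates. -/
abbrev colimitAlgebra : Algebra F where
  a := c.pt
  str := colimitStr hFc

variable {hFc} {B : Algebra F}

lemma leg_succ_hom (g : colimitAlgebra hFc ⟶ B) (n : ℕ) :
    leg c (n + 1) ≫ g.f = F.map (leg c n ≫ g.f) ≫ B.str := by
  rw [F.map_comp_assoc, g.h, reassoc_of% (map_leg_colimitStr hFc n)]

/-- The restriction to `X` of an algebra morphism out of `colimitAlgebra hFc`. -/
def restrict (g : colimitAlgebra hFc ⟶ B) : CoalgAlgHom X B where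
  hom := leg c 0 ≫ g.f
  str_map_str := by rw [← leg_succ_hom, reassoc_of% (str_leg_succ c 0)]

lemma iter_restrict_hom (g : colimitAlgebra hFc ⟶ B) (n : ℕ) :
    ((restrict g).iter n).hom = leg c n ≫ g.f := by
  induction n with
  | zero => rfl
  | succ n ih => rw [leg_succ_hom, ← ih]; rfl

variable (hc : IsColimit c)

lemma leg_desc_cocone (h : CoalgAlgHom X B) (n : ℕ) :
    leg c n ≫ hc.desc h.cocone = (h.iter n).hom :=
  hc.fac h.cocone n

variable (hFc) in
/-- The extension to `colimitAlgebra hFc` of a coalgebra-to-algebra morphism out of `X`. -/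
def extend (h : CoalgAlgHom X B) : colimitAlgebra hFc ⟶ B where
  f := hc.desc h.cocone
  h := hFc.hom_ext fun n => by
    change F.map (leg c n) ≫ F.map (hc.desc h.cocone) ≫ B.str =
      F.map (leg c n) ≫ colimitStr hFc ≫ hc.desc h.cocone
    rw [← F.map_comp_assoc, reassoc_of% (map_leg_colimitStr hFc n), leg_desc_cocone,
      leg_desc_cocone]
    rfl

/-- Algebra morphisms out of the colimit of the chain of iterates of `F` on `X` correspond to
coalgebra-to-algebra morphisms out of `X`. -/
def colimitAlgebraHomEquiv : (colimitAlgebra hFc ⟶ B) ≃ CoalgAlgHom X B where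
  toFun := restrict
  invFun := extend hFc hc
  left_inv g := Algebra.ext <| hc.hom_ext fun n =>
    (leg_desc_cocone hc (restrict g) n).trans (iter_restrict_hom g n)
  right_inv h := CoalgAlgHom.ext (leg_desc_cocone hc h 0)

variable (hFc) in
/-- The colimit of the chain of iterates of `F` on an initial object is an initial algebra. -/
def isInitialColimitAlgebra (hX : IsInitial X.V) : IsInitial (colimitAlgebra hFc) :=
  have (B : Algebra F) : Unique (colimitAlgebra hFc ⟶ B) :=
    have := CoalgAlgHom.uniqueOfIsInitial (B := B) hX
    (colimitAlgebraHomEquiv hc).unique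
  IsInitial.ofUnique _

/-- The initial chain `0 ⟶ F 0 ⟶ F² 0 ⟶ ⋯` of an endofunctor. -/
noncomputable abbrev initialChain [HasInitial C] (F : C ⥤ C) : ℕ ⥤ C :=
  iterChain (F := F) ⟨⊥_ C, initial.to _⟩

end Adamek

theorem initial_algebra_exists_general {C : Type u} [Category.{v} C] [HasInitial C] (F : C ⥤ C)
    [HasColimit (Adamek.initialChain F)] [PreservesColimit (Adamek.initialChain F) F] :
    HasInitial (Endofunctor.Algebra F) ∧
      ∀ (A : Endofunctor.Algebra F), IsInitial A → IsIso A.str := by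
  have hL := colimit.isColimit (Adamek.initialChain F)
  have hFL := isColimitOfPreserves F hL
  exact ⟨(Adamek.isInitialColimitAlgebra hFL hL initialIsInitial).hasInitial,
    fun _ hA => Endofunctor.Algebra.Initial.str_isIso hA⟩

/-- Adámek's theorem: if `C` has an initial object and colimits of chains (diagrams of
shape `ℕ`), and `F : C ⥤ C` is an ω-cocontinuous endofunctor (it preserves colimits of
chains), then the category of `F`-algebras has an initial object; moreover the structure
morphism of any such initial algebra is an isomorphism (Lambek's lemma). -/
theorem initial_algebra_exists (C : Type u) [Category.{v} C]
    [HasInitial C] [HasColimitsOfShape ℕ C] (F : C ⥤ C)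
    (hF : Nonempty (PreservesColimitsOfShape ℕ F)) :
    HasInitial (Endofunctor.Algebra F) ∧
      ∀ (A : Endofunctor.Algebra F), IsInitial A → IsIso A.str := by
  obtain ⟨_⟩ := hF
  exact initial_algebra_exists_general F
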